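/- arXiv:1911.04277 — 3 statements merged into one kernel-verified Lean document; each statement's English description precedes it below -/
import Mathlib

section
/- Let G be a finite simple undirected graph on n vertices with no isolated vertices admitting a split partition (K, I) where K is a clique, I is an independent set, |I| = 2, |K| ≥ 2, every vertex of K has at least one neighbor in I, and G is equimatchable. Let p be the number of vertices of G of degree n − 1 and write I = {x, y}. Then n is odd, every vertex of K has degree n − 2 or n − 1, and d(x) + d(y) = p + n − 2. -/
open Finset

variable {V : Type*}

/-- A matching of `G`: a set of edges of `G` that are pairwise disjoint. -/
def IsMatching (G : SimpleGraph V) (M : Finset (Sym2 V)) : Prop :=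
  (↑M : Set (Sym2 V)) ⊆ G.edgeSet ∧
    ∀ e ∈ M, ∀ f ∈ M, e ≠ f → ∀ v : V, v ∈ e → v ∉ f

/-- A maximal matching of `G`: a matching such that every edge of `G` shares an
endpoint with some edge of the matching. -/
def IsMaximalMatching (G : SimpleGraph V) (M : Finset (Sym2 V)) : Prop :=
  IsMatching G M ∧ ∀ e ∈ G.edgeSet, ∃ f ∈ M, ∃ v : V, v ∈ e ∧ v ∈ f

/-- `G` is equimatchable if all maximal matchings have the same cardinality. -/
def Equimatchable (G : SimpleGraph V) : Prop :=
  ∀ M₁ M₂ : Finset (Sym2 V), IsMaximalMatching G M₁ → IsMaximalMatching G M₂ →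
    M₁.card = M₂.card

/-- An independent set: a set of pairwise non-adjacent vertices. -/
def IsIndepSet (G : SimpleGraph V) (s : Set V) : Prop :=
  s.Pairwise fun a b => ¬ G.Adj a b

/-- A split graph: the vertex set can be partitioned into a clique and an
independent set. -/
def IsSplitGraph (G : SimpleGraph V) : Prop :=
  ∃ K I : Set V, Disjoint K I ∧ K ∪ I = Set.univ ∧ G.IsClique K ∧ IsIndepSet G I

/-- `M` is a matching of `G` of size `m` covering exactly `S`. -/
def CoversExactly {V : Type*} (G : SimpleGraph V) (M : Finset (Sym2 V)) (S : Finset V) (m : ℕ) :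
    Prop :=
  IsMatching G M ∧ (∀ v, (∃ e ∈ M, v ∈ e) ↔ v ∈ S) ∧ M.card = m

theorem covers_insert {V : Type*} [DecidableEq V] (G : SimpleGraph V) {M : Finset (Sym2 V)}
    {S : Finset V} {m : ℕ} (h : CoversExactly G M S m) {a b : V} (hab : G.Adj a b)
    (ha : a ∉ S) (hb : b ∉ S) :
    CoversExactly G (insert s(a, b) M) (insert a (insert b S)) (m + 1) := by
  obtain ⟨⟨h1, h2⟩, h3, h4⟩ := h
  have key : ∀ e ∈ M, ∀ v, v ∈ e → v ∈ S := fun e he v hv => (h3 v).1 ⟨e, he, hv⟩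
  have hn : s(a, b) ∉ M := fun h => ha (key _ h a (by simp))
  have hd : ∀ e ∈ M, ∀ v, v ∈ e → v ≠ a ∧ v ≠ b := by
    intro e he v hv
    have := key e he v hv
    exact ⟨by rintro rfl; exact ha this, by rintro rfl; exact hb this⟩
  refine ⟨⟨?_, ?_⟩, ?_, ?_⟩
  · intro e he
    rcases Finset.mem_insert.1 (Finset.mem_coe.1 he) with rfl | he
    · exact hab
    · exact h1 he
  · intro e he f hf hef v hve hvf
    rcases Finset.mem_insert.1 he with rfl | he <;> rcases Finset.mem_insert.1 hf with rfl | hf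
    · exact hef rfl
    · have := hd f hf v hvf
      rcases Sym2.mem_iff.1 hve with h | h
      · exact this.1 h
      · exact this.2 h
    · have := hd e he v hve
      rcases Sym2.mem_iff.1 hvf with h | h
      · exact this.1 h
      · exact this.2 h
    · exact h2 e he f hf hef v hve hvf
  · intro v
    have := h3 v
    simp only [Finset.mem_insert, or_and_right, exists_or, exists_eq_left, Sym2.mem_iff, this, or_assoc]
  · rw [Finset.card_insert_of_notMem hn, h4]

theorem clique_covers {V : Type*} [DecidableEq V] (G : SimpleGraph V) (m : ℕ) :
    ∀ S : Finset V, G.IsClique (S : Set V) → S.card = 2 * m → ∃ M, CoversExactly G M S m := by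
  induction m with
  | zero =>
    intro S _ hc
    have : S = ∅ := Finset.card_eq_zero.1 (by omega)
    subst this
    exact ⟨∅, ⟨by simp, by simp⟩, by simp, by simp⟩
  | succ m ih =>
    intro S hS hc
    obtain ⟨a, ha, b, hb, hab⟩ := Finset.one_lt_card.1 (show 1 < S.card by omega)
    have hb' : b ∈ S.erase a := Finset.mem_erase.2 ⟨hab.symm, hb⟩
    obtain ⟨M, hM⟩ := ih ((S.erase a).erase b)
      (hS.subset (by intro v hv; exact Finset.mem_of_mem_erase (Finset.mem_of_mem_erase hv)))
      (by rw [Finset.card_erase_of_mem hb', Finset.card_erase_of_mem ha]; omega)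
    have := covers_insert G hM (hS ha hb hab) (by simp) (by simp)
    rw [Finset.insert_erase hb', Finset.insert_erase ha] at this
    exact ⟨_, this⟩

theorem stmt_15 {V : Type*} [Fintype V] [DecidableEq V]
    (G : SimpleGraph V) [DecidableRel G.Adj]
    (n : ℕ) (hn : Fintype.card V = n)
    (hNoIso : ∀ v : V, ∃ w : V, G.Adj v w)
    (K I : Finset V)
    (hdisj : Disjoint K I) (hcover : K ∪ I = Finset.univ)
    (hclique : G.IsClique (K : Set V)) (hindep : IsIndepSet G (I : Set V))
    (hKI : ∀ k ∈ K, ∃ i ∈ I, G.Adj k i)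
    (hK2 : 2 ≤ K.card) (hEq : Equimatchable G)
    (x y : V) (hxy : x ≠ y) (hI2 : I = {x, y})
    (p : ℕ)
    (hp : p = (Finset.univ.filter fun v : V => G.degree v = n - 1).card) :
    Odd n ∧ (∀ k ∈ K, G.degree k = n - 2 ∨ G.degree k = n - 1) ∧
      G.degree x + G.degree y = p + n - 2 := by
  subst hI2
  have hx : x ∉ K := fun h => Finset.disjoint_left.1 hdisj h (by simp)
  have hy : y ∉ K := fun h => Finset.disjoint_left.1 hdisj h (by simp)
  have hcov : ∀ v, v ∈ K ∨ v = x ∨ v = y := by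
    intro v
    have := Finset.mem_univ v
    rw [← hcover] at this
    simpa only [Finset.mem_union, Finset.mem_insert, Finset.mem_singleton] using this
  have hnxy : ¬ G.Adj x y := hindep (by simp) (by simp) hxy
  have hnyx : ¬ G.Adj y x := fun h => hnxy h.symm
  have hadj : ∀ k ∈ K, G.Adj x k ∨ G.Adj y k := by
    intro k hk
    obtain ⟨i, hi, h⟩ := hKI k hk
    simp only [Finset.mem_insert, Finset.mem_singleton] at hi
    rcases hi with rfl | rfl
    · exact Or.inl h.symm
    · exact Or.inr h.symm
  have hnK : n = K.card + 2 := by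
    rw [← hn, ← Finset.card_univ, ← hcover, Finset.card_union_of_disjoint hdisj,
      Finset.card_pair hxy]
  have hNx : G.neighborFinset x = K.filter (fun k => G.Adj x k) := by
    ext v
    simp only [SimpleGraph.mem_neighborFinset, Finset.mem_filter]
    constructor
    · intro h
      refine ⟨?_, h⟩
      rcases hcov v with h' | rfl | rfl
      · exact h'
      · exact absurd h (G.loopless.irrefl _)
      · exact absurd h hnxy
    · exact fun h => h.2
  have hNy : G.neighborFinset y = K.filter (fun k => G.Adj y k) := by
    ext v
    simp only [SimpleGraph.mem_neighborFinset, Finset.mem_filter]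
    constructor
    · intro h
      refine ⟨?_, h⟩
      rcases hcov v with h' | rfl | rfl
      · exact h'
      · exact absurd h hnyx
      · exact absurd h (G.loopless.irrefl _)
    · exact fun h => h.2
  have hdx : G.degree x = (K.filter (fun k => G.Adj x k)).card := by
    rw [← hNx, SimpleGraph.card_neighborFinset_eq_degree]
  have hdy : G.degree y = (K.filter (fun k => G.Adj y k)).card := by
    rw [← hNy, SimpleGraph.card_neighborFinset_eq_degree]
  have hdk : ∀ k ∈ K, G.degree k =
      K.card - 1 + (({x, y} : Finset V).filter (fun i => G.Adj i k)).card := by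
    intro k hk
    rw [← SimpleGraph.card_neighborFinset_eq_degree, ← Finset.card_erase_of_mem hk,
      ← Finset.card_union_of_disjoint]
    · congr 1
      ext v
      simp only [SimpleGraph.mem_neighborFinset, Finset.mem_union, Finset.mem_erase,
        Finset.mem_filter, Finset.mem_insert, Finset.mem_singleton]
      constructor
      · intro h
        rcases hcov v with h' | h'
        · exact Or.inl ⟨h.ne', h'⟩
        · exact Or.inr ⟨h', h.symm⟩
      · rintro (⟨h, h'⟩ | ⟨_, h⟩)
        · exact hclique hk h' h.symm
        · exact h.symm
    · exact Finset.disjoint_of_subset_left (Finset.erase_subset _ _)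
        (Finset.disjoint_of_subset_right (Finset.filter_subset _ _) hdisj)
  have hdk2 : ∀ k ∈ K, (G.Adj x k ∧ G.Adj y k ∧ G.degree k = n - 1) ∨
      (¬ (G.Adj x k ∧ G.Adj y k) ∧ G.degree k = n - 2) := by
    intro k hk
    have h := hdk k hk
    rw [Finset.filter_insert, Finset.filter_singleton] at h
    by_cases h1 : G.Adj x k <;> by_cases h2 : G.Adj y k
    · left
      simp only [h1, h2, if_true, Finset.card_pair hxy] at h
      exact ⟨h1, h2, by omega⟩
    · right
      simp [h1, h2] at h
      exact ⟨by tauto, by omega⟩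
    · right
      simp [h1, h2] at h
      exact ⟨by tauto, by omega⟩
    · rcases hadj k hk with h' | h' <;> contradiction
  have hpK : (Finset.univ.filter fun v : V => G.degree v = n - 1) =
      K.filter (fun k => G.Adj x k) ∩ K.filter (fun k => G.Adj y k) := by
    ext v
    simp only [Finset.mem_filter, Finset.mem_univ, true_and, Finset.mem_inter]
    constructor
    · intro h
      have hvK : v ∈ K := by
        have c1 := Finset.card_filter_le K (fun k => G.Adj x k)
        have c2 := Finset.card_filter_le K (fun k => G.Adj y k)
        rcases hcov v with h' | rfl | rfl
        · exact h'
        · omega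
        · omega
      rcases hdk2 v hvK with ⟨h1, h2, _⟩ | ⟨_, h2⟩
      · exact ⟨⟨hvK, h1⟩, hvK, h2⟩
      · omega
    · rintro ⟨⟨hvK, h1⟩, _, h2⟩
      rcases hdk2 v hvK with ⟨_, _, h3⟩ | ⟨h3, _⟩
      · exact h3
      · exact absurd ⟨h1, h2⟩ h3
  refine ⟨?_, ?_, ?_⟩
  · by_contra hodd
    rw [Nat.not_odd_iff_even] at hodd
    obtain ⟨r, hr⟩ := hodd
    -- a system of distinct representatives
    obtain ⟨a, b, ha, hb, hab, hxa, hyb⟩ :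
        ∃ a b, a ∈ K ∧ b ∈ K ∧ a ≠ b ∧ G.Adj x a ∧ G.Adj y b := by
      obtain ⟨a, hxa⟩ := hNoIso x
      obtain ⟨b, hyb⟩ := hNoIso y
      have ha : a ∈ K := by
        have := (SimpleGraph.mem_neighborFinset G x a).2 hxa
        rw [hNx] at this
        exact (Finset.mem_filter.1 this).1
      have hb : b ∈ K := by
        have := (SimpleGraph.mem_neighborFinset G y b).2 hyb
        rw [hNy] at this
        exact (Finset.mem_filter.1 this).1
      by_cases hab : a = b
      · subst hab
        obtain ⟨c, hc, hca⟩ := Finset.exists_mem_ne (show 1 < K.card by omega) a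
        rcases hadj c hc with h | h
        · exact ⟨c, a, hc, ha, hca, h, hyb⟩
        · exact ⟨a, c, ha, hc, hca.symm, hxa, h⟩
      · exact ⟨a, b, ha, hb, hab, hxa, hyb⟩
    have hmax : ∀ M S m, CoversExactly G M S m → K ⊆ S → IsMaximalMatching G M := by
      intro M S m ⟨h1, h2, _⟩ hKS
      refine ⟨h1, ?_⟩
      intro e
      induction e using Sym2.ind with
      | _ u v =>
        intro he
        have huv : G.Adj u v := he
        have : u ∈ K ∨ v ∈ K := by
          rcases hcov u with h | rfl | rfl
          · exact Or.inl h
          · have := (SimpleGraph.mem_neighborFinset G _ v).2 huv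
            rw [hNx] at this
            exact Or.inr (Finset.mem_filter.1 this).1
          · have := (SimpleGraph.mem_neighborFinset G _ v).2 huv
            rw [hNy] at this
            exact Or.inr (Finset.mem_filter.1 this).1
        rcases this with h | h
        · obtain ⟨f, hf, hv⟩ := (h2 u).2 (hKS h)
          exact ⟨f, hf, u, by simp, hv⟩
        · obtain ⟨f, hf, hv⟩ := (h2 v).2 (hKS h)
          exact ⟨f, hf, v, by simp, hv⟩
    obtain ⟨M₁, hM₁⟩ := clique_covers G (r - 1) K hclique (by omega)
    have hb' : b ∈ K.erase a := Finset.mem_erase.2 ⟨hab.symm, hb⟩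
    obtain ⟨M₂, hM₂⟩ := clique_covers G (r - 2) ((K.erase a).erase b)
      (hclique.subset (by intro v hv; exact Finset.mem_of_mem_erase (Finset.mem_of_mem_erase hv)))
      (by rw [Finset.card_erase_of_mem hb', Finset.card_erase_of_mem ha]; omega)
    have hM₃ := covers_insert G hM₂ hyb (by simp [hy]) (by simp)
    rw [Finset.insert_erase hb'] at hM₃
    have hM₄ := covers_insert G hM₃ hxa (by simp [hx, hxy]) (by
      have : a ≠ y := by rintro rfl; exact hy ha
      simp [this])
    have e := hEq _ _ (hmax _ _ _ hM₁ subset_rfl) (hmax _ _ _ hM₄ (by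
      intro v hv
      by_cases hva : v = a <;> simp [hva, hv]))
    rw [hM₁.2.2, hM₄.2.2] at e
    omega
  · intro k hk
    rcases hdk2 k hk with ⟨_, _, h⟩ | ⟨_, h⟩
    · exact Or.inr h
    · exact Or.inl h
  · have hU : K.filter (fun k => G.Adj x k) ∪ K.filter (fun k => G.Adj y k) = K := by
      rw [← Finset.filter_or]
      exact Finset.filter_true_of_mem hadj
    have hc := Finset.card_union_add_card_inter
      (K.filter (fun k => G.Adj x k)) (K.filter (fun k => G.Adj y k))
    rw [hU, ← hpK, ← hp, ← hdx, ← hdy] at hc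
    omega
end

section
/- Let G be a finite simple undirected graph on n ≥ 4 vertices with no isolated vertices, let p be the number of vertices of G of degree n − 1, and let (v₁, v₂, …, vₙ) be an ordering of the vertices of G with non-decreasing degrees. If G is an equimatchable split graph and 2 ≤ d(v₂) ≤ n − 2, then n is odd, d(v₃) ≥ n − 2, and d(v₁) + d(v₂) = p + n − 2. -/
open Finset

variable {V : Type*}

section Helpers
variable [Fintype V] [DecidableEq V]

/-- `S` is the set of vertices covered by some matching. -/
def CovSet (G : SimpleGraph V) (S : Finset V) : Prop :=
  ∃ M : Finset (Sym2 V), IsMatching G M ∧ 2 * M.card = S.card ∧ ∀ v, v ∈ S ↔ ∃ e ∈ M, v ∈ e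

lemma covSet_empty (G : SimpleGraph V) : CovSet G ∅ :=
  ⟨∅, by simp [IsMatching], by simp, by simp⟩

lemma covSet_insert {G : SimpleGraph V} {S : Finset V} (h : CovSet G S) {x y : V}
    (hxy : G.Adj x y) (hx : x ∉ S) (hy : y ∉ S) : CovSet G (insert x (insert y S)) := by
  obtain ⟨M, ⟨hM1, hM2⟩, hc, hS⟩ := h
  have hnx : ∀ e ∈ M, x ∉ e := fun e he hxe => hx ((hS x).2 ⟨e, he, hxe⟩)
  have hny : ∀ e ∈ M, y ∉ e := fun e he hxe => hy ((hS y).2 ⟨e, he, hxe⟩)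
  have hne := hxy.ne
  have hnot : s(x, y) ∉ M := fun h => hnx _ h (by simp)
  refine ⟨insert s(x, y) M, ⟨?_, ?_⟩, ?_, ?_⟩
  · intro e he
    simp only [Finset.coe_insert, Set.mem_insert_iff] at he
    rcases he with rfl | he
    · simpa using hxy
    · exact hM1 he
  · intro e he f hf hef v hve hvf
    rw [Finset.mem_insert] at he hf
    rcases he with rfl | he <;> rcases hf with rfl | hf
    · exact hef rfl
    · rcases Sym2.mem_iff.1 hve with rfl | rfl
      · exact hnx _ hf hvf
      · exact hny _ hf hvf
    · rcases Sym2.mem_iff.1 hvf with rfl | rfl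
      · exact hnx _ he hve
      · exact hny _ he hve
    · exact hM2 e he f hf hef v hve hvf
  · rw [Finset.card_insert_of_notMem hnot, Finset.card_insert_of_notMem,
      Finset.card_insert_of_notMem hy]
    · omega
    · simp [hne, hx]
  · intro v
    simp only [Finset.mem_insert, hS, exists_eq_or_imp, Sym2.mem_iff, or_assoc]

lemma covSet_clique {G : SimpleGraph V} : ∀ (m : ℕ) (S T : Finset V), CovSet G S →
    T.card = 2 * m → Disjoint S T → (∀ a ∈ T, ∀ b ∈ T, a ≠ b → G.Adj a b) →
    CovSet G (S ∪ T) := by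
  intro m
  induction m with
  | zero =>
    intro S T hS hT _ _
    have : T = ∅ := by simpa using hT
    subst this; simpa using hS
  | succ m ih =>
    intro S T hS hT hd hc
    obtain ⟨a, ha⟩ : T.Nonempty := Finset.card_pos.1 (by omega)
    have h1 : (T.erase a).card = 2 * m + 1 := by rw [Finset.card_erase_of_mem ha]; omega
    obtain ⟨b, hb⟩ : (T.erase a).Nonempty := Finset.card_pos.1 (by omega)
    have h2 : ((T.erase a).erase b).card = 2 * m := by rw [Finset.card_erase_of_mem hb]; omega
    obtain ⟨hba, hbT⟩ := Finset.mem_erase.1 hb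
    have haS := Finset.disjoint_right.1 hd ha
    have hbS := Finset.disjoint_right.1 hd hbT
    have := ih _ _ (covSet_insert hS (hc a ha b hbT hba.symm) haS hbS) h2 (by
      rw [Finset.disjoint_left]
      intro v hv
      have : v ∈ S → v ∉ T := fun h => Finset.disjoint_left.1 hd h
      simp only [Finset.mem_insert] at hv
      simp only [Finset.mem_erase]
      grind) (by
      intro x hx y hy
      exact hc x (Finset.mem_of_mem_erase (Finset.mem_of_mem_erase hx)) y
        (Finset.mem_of_mem_erase (Finset.mem_of_mem_erase hy)))
    convert this using 1
    ext v
    simp only [Finset.mem_union, Finset.mem_insert, Finset.mem_erase]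
    grind

lemma cov_eq {G : SimpleGraph V} (hEq : Equimatchable G) {S T : Finset V}
    (hS : CovSet G S) (hT : CovSet G T) (hS' : ∀ a b, a ∉ S → b ∉ S → ¬ G.Adj a b)
    (hT' : ∀ a b, a ∉ T → b ∉ T → ¬ G.Adj a b) : S.card = T.card := by
  have key : ∀ {S : Finset V} {M : Finset (Sym2 V)}, IsMatching G M →
      (∀ v, v ∈ S ↔ ∃ e ∈ M, v ∈ e) → (∀ a b, a ∉ S → b ∉ S → ¬ G.Adj a b) →
      IsMaximalMatching G M := by
    intro S M hM h h'
    refine ⟨hM, ?_⟩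
    intro e
    induction e using Sym2.ind with
    | _ a b =>
      intro he
      by_contra hcon
      refine h' a b ?_ ?_ (by simpa using he)
      · intro ha
        obtain ⟨f, hf, haf⟩ := (h a).1 ha
        exact hcon ⟨f, hf, a, by simp, haf⟩
      · intro ha
        obtain ⟨f, hf, haf⟩ := (h b).1 ha
        exact hcon ⟨f, hf, b, by simp, haf⟩
  obtain ⟨M, hM, hc, hm⟩ := hS
  obtain ⟨N, hN, hd, hn⟩ := hT
  have := hEq M N (key hM hm hS') (key hN hn hT')
  omega

lemma split_max {G : SimpleGraph V} (h : IsSplitGraph G) : ∃ K : Finset V,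
    (∀ a ∈ K, ∀ b ∈ K, a ≠ b → G.Adj a b) ∧ (∀ a b, a ∉ K → b ∉ K → ¬ G.Adj a b) ∧
    (∀ x, x ∉ K → ∃ y ∈ K, ¬ G.Adj x y) := by
  classical
  obtain ⟨K, I, hd, hu, hK, hI⟩ := h
  have hI' : ∀ a b, a ∉ K → b ∉ K → ¬ G.Adj a b := by
    intro a b ha hb hab
    have ha' : a ∈ K ∪ I := hu ▸ Set.mem_univ a
    have hb' : b ∈ K ∪ I := hu ▸ Set.mem_univ b
    exact hI (ha'.resolve_left ha) (hb'.resolve_left hb) hab.ne hab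
  by_cases hx : ∃ x, x ∉ K ∧ ∀ y ∈ K, G.Adj x y
  · obtain ⟨x, hxK, hx⟩ := hx
    refine ⟨insert x K.toFinset, ?_, ?_, ?_⟩
    · intro a ha b hb hab
      simp only [Finset.mem_insert, Set.mem_toFinset] at ha hb
      rcases ha with rfl | ha <;> rcases hb with rfl | hb
      · exact absurd rfl hab
      · exact hx _ hb
      · exact (hx _ ha).symm
      · exact hK ha hb hab
    · intro a b ha hb
      simp only [Finset.mem_insert, Set.mem_toFinset, not_or] at ha hb
      exact hI' a b ha.2 hb.2
    · intro a ha
      simp only [Finset.mem_insert, Set.mem_toFinset, not_or] at ha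
      exact ⟨x, by simp, hI' a x ha.2 hxK⟩
  · refine ⟨K.toFinset, ?_, ?_, ?_⟩
    · intro a ha b hb hab
      exact hK (by simpa using ha) (by simpa using hb) hab
    · intro a b ha hb
      exact hI' a b (by simpa using ha) (by simpa using hb)
    · intro x hxK
      by_contra hcon
      push Not at hcon
      exact hx ⟨x, by simpa using hxK, fun y hy => hcon y (by simpa using hy)⟩

/-- completing a cover `A ∪ B`, `A ⊆ K`, `B` outside `K`. -/
lemma cov_complete {G : SimpleGraph V} {K A B : Finset V}
    (hK : ∀ a ∈ K, ∀ b ∈ K, a ≠ b → G.Adj a b)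
    (hA : A ⊆ K) (hB : Disjoint B K) (h : CovSet G (A ∪ B)) (hev : Even (K.card - A.card)) :
    CovSet G (K ∪ B) := by
  obtain ⟨m, hm⟩ := hev
  have hd : ∀ v, v ∈ B → v ∉ K := fun v h => Finset.disjoint_left.1 hB h
  have := covSet_clique m (A ∪ B) (K \ A) h
    (by rw [Finset.card_sdiff_of_subset hA]; omega)
    (by
      rw [Finset.disjoint_left]
      intro v hv
      have := hd v
      simp only [Finset.mem_union, Finset.mem_sdiff] at *
      grind)
    (fun a ha b hb => hK a (Finset.mem_sdiff.1 ha).1 b (Finset.mem_sdiff.1 hb).1)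
  convert this using 1
  ext v
  have := @hA v
  simp only [Finset.mem_union, Finset.mem_sdiff]
  grind

/-- Main structure. -/
lemma structure_main {G : SimpleGraph V} (hEq : Equimatchable G) {K : Finset V}
    (hK : ∀ a ∈ K, ∀ b ∈ K, a ≠ b → G.Adj a b) (hI : ∀ a b, a ∉ K → b ∉ K → ¬ G.Adj a b)
    (hM : ∀ x, x ∉ K → ∃ y ∈ K, ¬ G.Adj x y) (hno : ∀ v, ∃ w, G.Adj v w)
    (w0 : V) (hw : ∀ u, u ≠ w0 → ∀ y, ∃ y', y' ≠ y ∧ G.Adj u y')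
    (hne : ∃ x, x ∉ K) :
    (Even K.card ∧ ∃ x, ∀ u, u ∉ K ↔ u = x) ∨
    (Odd K.card ∧ (∀ y ∈ K, ∃ x, x ∉ K ∧ G.Adj x y) ∧
      ∃ a b, a ≠ b ∧ ∀ u, u ∉ K ↔ u = a ∨ u = b) := by
  have hnK : ∀ x y, x ∉ K → G.Adj x y → y ∈ K := by
    intro x y hx hxy
    by_contra hy
    exact hI x y hx hy hxy
  have hsub : ∀ B : Finset V, ∀ a b, a ∉ K ∪ B → b ∉ K ∪ B → ¬ G.Adj a b := by
    intro B a b ha hb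
    simp only [Finset.mem_union, not_or] at ha hb
    exact hI a b ha.1 hb.1
  obtain ⟨x, hx⟩ := hne
  obtain ⟨y, hxy⟩ := hno x
  have hy := hnK x y hx hxy
  rcases Nat.even_or_odd K.card with hev | hodd
  · left
    refine ⟨hev, ?_⟩
    have c0 : CovSet G (K ∪ ∅) := cov_complete hK (A := ∅) (by simp) (by simp)
      (by simpa using covSet_empty G) (by simpa using hev)
    have no2 : ∀ a b y z, a ∉ K → b ∉ K → a ≠ b → y ≠ z → G.Adj a y → G.Adj b z → False := by
      intro a b y z ha hb hab hyz hay hbz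
      have hy := hnK a y ha hay
      have hz := hnK b z hb hbz
      have c1 : CovSet G (({y, z} : Finset V) ∪ {a, b}) := by
        have := covSet_insert (covSet_insert (covSet_empty G) hay (by simp) (by simp)) hbz
          (by simp; grind) (by simp; grind)
        convert this using 1
        ext v; simp; grind
      have c2 : CovSet G (K ∪ {a, b}) := cov_complete hK (by
        intro v hv; simp at hv; grind) (by simp [ha, hb]) c1 (by
        rw [Finset.card_pair hyz]; grind)
      have := cov_eq hEq c0 c2 (hsub _) (hsub _)
      rw [Finset.card_union_of_disjoint (by simp), Finset.card_union_of_disjoint (by simp [ha, hb]),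
        Finset.card_pair hab] at this
      simp at this
    refine ⟨x, fun u => ⟨fun hu => ?_, fun h => h ▸ hx⟩⟩
    by_contra hux
    by_cases hxw : x = w0
    · obtain ⟨z, hz, huz⟩ := hw u (by grind) y
      exact no2 x u y z hx hu (Ne.symm hux) hz.symm hxy huz
    · obtain ⟨t, hut⟩ := hno u
      obtain ⟨z, hz, hxz⟩ := hw x hxw t
      exact no2 u x t z hu hx hux hz.symm hut hxz
  · right
    have c1 : CovSet G (K ∪ {x}) := by
      have : CovSet G (({y} : Finset V) ∪ {x}) := by
        have := covSet_insert (covSet_empty G) hxy (by simp) (by simp)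
        convert this using 1
        ext v; simp; grind
      exact cov_complete hK (by simpa using hy) (by simpa using hx) this (by
        rw [Finset.card_singleton]; grind)
    have c1c : (K ∪ {x}).card = K.card + 1 := by
      rw [Finset.card_union_of_disjoint (by simpa using hx)]; simp
    have hall : ∀ y ∈ K, ∃ x, x ∉ K ∧ G.Adj x y := by
      intro z hz
      by_contra hcon
      push Not at hcon
      obtain ⟨m, hm⟩ := hodd
      have hce : (K.erase z).card = 2 * m := by rw [Finset.card_erase_of_mem hz]; omega
      have c2 := covSet_clique m ∅ (K.erase z) (covSet_empty G) hce (by simp)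
        (fun a ha b hb => hK a (Finset.mem_of_mem_erase ha) b (Finset.mem_of_mem_erase hb))
      rw [Finset.empty_union] at c2
      have := cov_eq hEq c1 c2 (hsub _) (by
        intro a b ha hb hab
        have hne := hab.ne
        simp only [Finset.mem_erase, not_and] at ha hb
        by_cases ha' : a = z
        · subst ha'
          exact hcon b (fun h => hb (Ne.symm hne) h) hab.symm
        · by_cases hb' : b = z
          · subst hb'
            exact hcon a (ha ha') hab
          · exact hI a b (ha ha') (hb hb') hab)
      omega
    refine ⟨hodd, hall, ?_⟩
    have no3 : ∀ a b c y z t, a ∉ K → b ∉ K → c ∉ K → a ≠ b → a ≠ c → b ≠ c →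
        y ≠ z → y ≠ t → z ≠ t → G.Adj a y → G.Adj b z → G.Adj c t → False := by
      intro a b c y z t ha hb hc hab hac hbc hyz hyt hzt hay hbz hct
      have hy := hnK a y ha hay
      have hz := hnK b z hb hbz
      have ht := hnK c t hc hct
      have d1 : CovSet G (({y, z, t} : Finset V) ∪ {a, b, c}) := by
        have := covSet_insert (covSet_insert (covSet_insert (covSet_empty G) hay
          (by simp) (by simp)) hbz (by simp; grind) (by simp; grind)) hct
          (by simp; grind) (by simp; grind)
        convert this using 1
        ext v; simp; grind
      have e3 : ({y, z, t} : Finset V).card = 3 := by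
        rw [Finset.card_eq_three]; exact ⟨y, z, t, hyz, hyt, hzt, rfl⟩
      have e3' : ({a, b, c} : Finset V).card = 3 := by
        rw [Finset.card_eq_three]; exact ⟨a, b, c, hab, hac, hbc, rfl⟩
      have hsubK : ({y, z, t} : Finset V) ⊆ K := by
        intro v hv; simp at hv; grind
      have d2 : CovSet G (K ∪ {a, b, c}) := cov_complete hK hsubK (by simp [ha, hb, hc]) d1 (by
        have := Finset.card_le_card hsubK
        rw [e3] at *; grind)
      have := cov_eq hEq c1 d2 (hsub _) (hsub _)
      rw [c1c, Finset.card_union_of_disjoint (by simp [ha, hb, hc]), e3'] at this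
      omega
    obtain ⟨x', hx', hxx'⟩ : ∃ x', x' ∉ K ∧ x' ≠ x := by
      obtain ⟨z, hz, hxz⟩ := hM x hx
      obtain ⟨x', hx', h⟩ := hall z hz
      exact ⟨x', hx', fun h' => hxz (h' ▸ h)⟩
    refine ⟨x, x', hxx'.symm, fun u => ⟨fun hu => ?_, ?_⟩⟩
    swap
    · rintro (rfl | rfl) <;> assumption
    by_contra hcon
    push Not at hcon
    -- relabel so that b, c ≠ w0
    have fin : ∀ a b c, a ∉ K → b ∉ K → c ∉ K → a ≠ b → a ≠ c → b ≠ c → b ≠ w0 → c ≠ w0 →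
        False := by
      intro a b c ha hb hc hab hac hbc hbw hcw
      obtain ⟨y1, h1⟩ := hno a
      obtain ⟨y2, h21, h2⟩ := hw b hbw y1
      have hcN : ∀ t, G.Adj c t → t = y1 ∨ t = y2 := by
        intro t ht
        by_contra h
        push Not at h
        exact no3 a b c y1 y2 t ha hb hc hab hac hbc h21.symm h.1.symm h.2.symm h1 h2 ht
      have hc2 : G.Adj c y2 := by
        obtain ⟨t, h, ht⟩ := hw c hcw y1
        rcases hcN t ht with rfl | rfl
        · exact absurd rfl h
        · exact ht
      have hbN : ∀ t, G.Adj b t → t = y1 ∨ t = y2 := by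
        intro t ht
        by_contra h
        push Not at h
        exact no3 a c b y1 y2 t ha hc hb hac hab hbc.symm h21.symm h.1.symm h.2.symm h1 hc2 ht
      have hb1 : G.Adj b y1 := by
        obtain ⟨t, h, ht⟩ := hw b hbw y2
        rcases hbN t ht with rfl | rfl
        · exact ht
        · exact absurd rfl h
      obtain ⟨y3, hy3, h3⟩ : ∃ y3 ∈ K, y3 ∉ ({y1, y2} : Finset V) := by
        have hs : ({y1, y2} : Finset V) ⊆ K := by
          intro v hv
          have := hnK _ _ ha h1
          have := hnK _ _ hb h2
          simp at hv; grind
        have h := Finset.card_le_card hs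
        rw [Finset.card_pair h21.symm] at h
        apply Finset.exists_mem_notMem_of_card_lt_card
        rw [Finset.card_pair h21.symm]
        grind
      simp only [Finset.mem_insert, Finset.mem_singleton, not_or] at h3
      obtain ⟨d, hd, hd3⟩ := hall y3 hy3
      have hdb : b ≠ d := by rintro rfl; exact (hbN _ hd3).elim h3.1 h3.2
      have hdc : c ≠ d := by rintro rfl; exact (hcN _ hd3).elim h3.1 h3.2
      exact no3 b c d y1 y2 y3 hb hc hd hbc hdb hdc h21.symm (Ne.symm h3.1) (Ne.symm h3.2)
        hb1 hc2 hd3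
    by_cases e1 : x = w0
    · exact fin x x' u hx hx' hu hxx'.symm (Ne.symm hcon.1) (Ne.symm hcon.2) (by grind) (by grind)
    · by_cases e2 : x' = w0
      · exact fin x' x u hx' hx hu hxx' (Ne.symm hcon.2) (Ne.symm hcon.1) (by grind) (by grind)
      · exact fin u x x' hu hx hx' hcon.1 hcon.2 hxx'.symm e1 e2

end Helpers

theorem stmt_17 {V : Type*} [Fintype V] [DecidableEq V]
    (G : SimpleGraph V) [DecidableRel G.Adj]
    (n : ℕ) (hn : Fintype.card V = n) (hn4 : 4 ≤ n)
    (hNoIso : ∀ v : V, ∃ w : V, G.Adj v w)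
    (p : ℕ)
    (hp : p = (Finset.univ.filter fun v : V => G.degree v = n - 1).card)
    (v : Fin n → V) (hbij : Function.Bijective v)
    (hmono : ∀ i j : Fin n, i ≤ j → G.degree (v i) ≤ G.degree (v j))
    (hEq : Equimatchable G) (hSplit : IsSplitGraph G)
    (h2 : 2 ≤ G.degree (v ⟨1, by omega⟩))
    (h2' : G.degree (v ⟨1, by omega⟩) ≤ n - 2) :
    Odd n ∧ n - 2 ≤ G.degree (v ⟨2, by omega⟩) ∧
      G.degree (v ⟨0, by omega⟩) + G.degree (v ⟨1, by omega⟩) = p + n - 2 := by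
  obtain ⟨K, hK, hI, hM⟩ := split_max hSplit
  have hnK : ∀ x y, x ∉ K → G.Adj x y → y ∈ K := by
    intro x y hx hxy
    by_contra hy
    exact hI x y hx hy hxy
  set i0 : Fin n := ⟨0, by omega⟩ with hi0
  set i1 : Fin n := ⟨1, by omega⟩ with hi1
  set i2 : Fin n := ⟨2, by omega⟩ with hi2
  have m01 := hmono i0 i1 (by simp [hi0, hi1])
  have m12 := hmono i1 i2 (by simp [hi2, hi1])
  have n01 : v i0 ≠ v i1 := fun h => by simpa [hi0, hi1] using hbij.1 h
  have n02 : v i0 ≠ v i2 := fun h => by simpa [hi0, hi2] using hbij.1 h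
  have n12 : v i1 ≠ v i2 := fun h => by simpa [hi1, hi2] using hbij.1 h
  have hmin : ∀ u, G.degree (v i0) ≤ G.degree u := by
    intro u
    obtain ⟨j, rfl⟩ := hbij.2 u
    exact hmono _ _ (by simp [hi0, Fin.le_def])
  have hmin1 : ∀ u, u ≠ v i0 → G.degree (v i1) ≤ G.degree u := by
    intro u hu
    obtain ⟨j, rfl⟩ := hbij.2 u
    refine hmono _ _ ?_
    have : j ≠ i0 := fun h => hu (h ▸ rfl)
    simp only [hi0, hi1, Fin.le_def, ne_eq, Fin.ext_iff] at *
    omega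
  have hw : ∀ u, u ≠ v i0 → ∀ y, ∃ y', y' ≠ y ∧ G.Adj u y' := by
    intro u hu y
    have h := hmin1 u hu
    have : 1 < (G.neighborFinset u).card := by rw [G.card_neighborFinset_eq_degree]; omega
    obtain ⟨y', hy', hne⟩ := Finset.exists_mem_ne this y
    exact ⟨y', hne, by simpa using hy'⟩
  have hcl : ∀ y ∈ K, K.erase y ⊆ G.neighborFinset y := by
    intro y hy z hz
    obtain ⟨h1, h2⟩ := Finset.mem_erase.1 hz
    simpa using hK y hy z h2 (Ne.symm h1)
  have hcard : K.card + Kᶜ.card = n := by rw [Finset.card_add_card_compl, hn]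
  have hout : ∀ x, x ∉ K → G.degree x + 1 ≤ K.card := by
    intro x hx
    obtain ⟨y, hy, hxy⟩ := hM x hx
    have : G.neighborFinset x ⊂ K := by
      refine (Finset.ssubset_iff_of_subset ?_).2 ⟨y, hy, by simpa using hxy⟩
      intro z hz
      exact hnK x z hx (by simpa using hz)
    have := Finset.card_lt_card this
    rwa [G.card_neighborFinset_eq_degree] at this
  have hfull : ∀ u, G.degree u = n - 1 ↔ ∀ w, w ≠ u → G.Adj u w := by
    intro u
    have hs : G.neighborFinset u ⊆ Finset.univ.erase u := by
      intro w hw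
      simp only [SimpleGraph.mem_neighborFinset] at hw
      simp [hw.ne']
    have hc : (Finset.univ.erase u).card = n - 1 := by
      rw [Finset.card_erase_of_mem (by simp), Finset.card_univ, hn]
    constructor
    · intro h w hwu
      have := Finset.eq_of_subset_of_card_le hs
        (by rw [hc, G.card_neighborFinset_eq_degree, h])
      have hw' : w ∈ G.neighborFinset u := by rw [this]; simp [hwu]
      simpa using hw'
    · intro h
      rw [← G.card_neighborFinset_eq_degree, ← hc]
      congr 1
      refine Finset.Subset.antisymm hs ?_
      intro w hw'
      simpa using h w (Finset.ne_of_mem_erase hw')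
  have hne : ∃ x, x ∉ K := by
    by_contra hcon
    push Not at hcon
    have := (hfull (v i1)).2 (fun w hw' => hK _ (hcon _) _ (hcon _) hw'.symm)
    omega
  have hdeg : ∀ y ∈ K, ∀ S : Finset V, (∀ s ∈ S, s ∉ K ∧ G.Adj y s) →
      K.card - 1 + S.card ≤ G.degree y := by
    intro y hy S hS
    rw [← G.card_neighborFinset_eq_degree, ← Finset.card_erase_of_mem hy,
      ← Finset.card_union_of_disjoint]
    · apply Finset.card_le_card
      refine Finset.union_subset (hcl y hy) ?_
      intro s hs
      simpa using (hS s hs).2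
    · rw [Finset.disjoint_left]
      intro a ha ha'
      exact (hS a ha').1 (Finset.mem_of_mem_erase ha)
  rcases structure_main hEq hK hI hM hNoIso (v i0) hw hne with
    ⟨hev, x, hx⟩ | ⟨hodd, hall, a, b, hab, hx⟩
  · have hc : Kᶜ = {x} := by ext u; simp [hx]
    rw [hc, Finset.card_singleton] at hcard
    have hxK : x ∉ K := (hx x).2 rfl
    have hge : ∀ u, u ≠ x → n - 2 ≤ G.degree u := by
      intro u hu
      have huK : u ∈ K := by by_contra h; exact hu ((hx u).1 h)
      have := hdeg u huK ∅ (by simp)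
      simp at this
      omega
    have hpx : p = G.degree x := by
      rw [hp, ← G.card_neighborFinset_eq_degree]
      congr 1
      ext u
      simp only [Finset.mem_filter, Finset.mem_univ, true_and, hfull,
        SimpleGraph.mem_neighborFinset]
      constructor
      · intro h
        by_cases hu : u = x
        · subst hu
          obtain ⟨y, hy, hxy⟩ := hM u hxK
          exact absurd (h y (by rintro rfl; exact hxK hy)) hxy
        · exact (h x (Ne.symm hu)).symm
      · intro h w hwu
        have huK := hnK _ _ hxK h
        by_cases hwx : w = x
        · subst hwx; exact h.symm
        · have hwK : w ∈ K := by by_contra h; exact hwx ((hx w).1 h)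
          exact hK u huK w hwK (Ne.symm hwu)
    have hxd := hout x hxK
    have h1 : G.degree (v i1) = n - 2 := by
      by_cases h : v i1 = x
      · have := hge (v i0) (by rw [← h]; exact n01)
        omega
      · have := hge _ h
        omega
    have h0 : G.degree (v i0) = G.degree x := by
      by_cases h : v i0 = x
      · rw [h]
      · have := hge _ h
        have := hmin x
        omega
    refine ⟨?_, by omega, by omega⟩
    rw [← hcard]; exact hev.add_one
  · have hc : Kᶜ = {a, b} := by ext u; simp only [Finset.mem_compl, hx]; simp
    rw [hc, Finset.card_pair hab] at hcard
    have haK : a ∉ K := (hx a).2 (Or.inl rfl)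
    have hbK : b ∉ K := (hx b).2 (Or.inr rfl)
    have hge : ∀ u ∈ K, n - 2 ≤ G.degree u := by
      intro u hu
      obtain ⟨s, hs, hsu⟩ := hall u hu
      have := hdeg u hu {s} (by simpa using ⟨hs, hsu.symm⟩)
      have hpos : 0 < K.card := Finset.card_pos.2 ⟨u, hu⟩
      simp at this
      omega
    have da := hout a haK
    have db := hout b hbK
    have h0 : v i0 ∉ K := by
      intro h
      have := hge _ h
      have := hmin a
      omega
    have h1 : v i1 ∉ K := by
      intro h
      have h3 := hge _ h
      by_cases ha : a = v i0
      · have := hmin1 b (by rw [← ha]; exact hab.symm)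
        omega
      · have := hmin1 a ha
        omega
    have h2K : v i2 ∈ K := by
      by_contra h
      rw [hx] at h h0 h1
      grind
    have hsum : G.degree (v i0) + G.degree (v i1) = G.degree a + G.degree b := by
      rw [hx] at h0 h1
      rcases h0 with h0 | h0 <;> rcases h1 with h1 | h1
      · exact absurd (h0.trans h1.symm) n01
      · rw [h0, h1]
      · rw [h0, h1, add_comm]
      · exact absurd (h0.trans h1.symm) n01
    have hU : G.neighborFinset a ∪ G.neighborFinset b = K := by
      ext y
      simp only [Finset.mem_union, SimpleGraph.mem_neighborFinset]
      constructor
      · rintro (h | h)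
        · exact hnK _ _ haK h
        · exact hnK _ _ hbK h
      · intro hy
        obtain ⟨s, hs, hsy⟩ := hall y hy
        rcases (hx s).1 hs with rfl | rfl
        · exact Or.inl hsy
        · exact Or.inr hsy
    have hP : p = (G.neighborFinset a ∩ G.neighborFinset b).card := by
      rw [hp]
      congr 1
      ext u
      simp only [Finset.mem_filter, Finset.mem_univ, true_and, hfull, Finset.mem_inter,
        SimpleGraph.mem_neighborFinset]
      constructor
      · intro h
        by_cases hu : u ∈ K
        · exact ⟨(h a (by rintro rfl; exact haK hu)).symm,
            (h b (by rintro rfl; exact hbK hu)).symm⟩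
        · obtain ⟨y, hy, hxy⟩ := hM u hu
          exact absurd (h y (by rintro rfl; exact hu hy)) hxy
      · rintro ⟨ha, hb⟩ w hwu
        have huK := hnK _ _ haK ha
        by_cases hwK : w ∈ K
        · exact hK u huK w hwK (Ne.symm hwu)
        · rcases (hx w).1 hwK with rfl | rfl
          · exact ha.symm
          · exact hb.symm
    have hfin := Finset.card_union_add_card_inter (G.neighborFinset a) (G.neighborFinset b)
    rw [hU, ← hP, G.card_neighborFinset_eq_degree, G.card_neighborFinset_eq_degree] at hfin
    have := hge _ h2K
    refine ⟨?_, by omega, by omega⟩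
    rw [← hcard]; exact hodd.add_even (by decide)
end

section
/- Let G be a finite simple undirected graph on n ≥ 4 vertices with no isolated vertices, let p be the number of vertices of degree n − 1, and suppose n is odd and there exist two vertices x and y with d(x) + d(y) = p + n − 2 such that every vertex other than x and y has degree n − 1 or n − 2. If x and y are adjacent, then p = n, i.e., G is complete. -/
open Finset

variable {V : Type*}

theorem stmt_19 {V : Type*} [Fintype V] [DecidableEq V]
    (G : SimpleGraph V) [DecidableRel G.Adj]
    (n : ℕ) (hn : Fintype.card V = n) (hn4 : 4 ≤ n)
    (hNoIso : ∀ v : V, ∃ w : V, G.Adj v w)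
    (p : ℕ)
    (hp : p = (Finset.univ.filter fun v : V => G.degree v = n - 1).card)
    (hodd : Odd n)
    (x y : V) (hxy : x ≠ y) (hsum : G.degree x + G.degree y = p + n - 2)
    (hdeg : ∀ v : V, v ≠ x → v ≠ y → (G.degree v = n - 1 ∨ G.degree v = n - 2))
    (hadj : G.Adj x y) :
    p = n := by
  classical
  have hc : ∀ v, Gᶜ.degree v = n - 1 - G.degree v := by
    intro v
    rw [SimpleGraph.degree_compl, hn]
  have hlt : ∀ v, G.degree v ≤ n - 1 := by
    intro v
    have := G.degree_lt_card_verts v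
    omega
  have hS : (Finset.univ.filter fun v : V => G.degree v = n - 1).card
      + (Finset.univ.filter fun v : V => ¬ G.degree v = n - 1).card = n := by
    rw [Finset.card_filter_add_card_filter_not, Finset.card_univ, hn]
  set S := Finset.univ.filter fun v : V => ¬ G.degree v = n - 1 with hSdef
  have hpos : ∀ u v, Gᶜ.Adj u v → v ∈ S := by
    intro u v h
    have h1 : 0 < Gᶜ.degree v := (Gᶜ.degree_pos_iff_exists_adj v).2 ⟨u, h.symm⟩
    rw [hc] at h1
    simp only [hSdef, Finset.mem_filter, Finset.mem_univ, true_and]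
    omega
  have hnxy : ¬ Gᶜ.Adj x y := fun h => h.2 hadj
  have hnyx : ¬ Gᶜ.Adj y x := fun h => h.2 hadj.symm
  have hdisj : Disjoint (Gᶜ.neighborFinset x) (Gᶜ.neighborFinset y) := by
    rw [Finset.disjoint_left]
    intro z hzx hzy
    rw [SimpleGraph.mem_neighborFinset] at hzx hzy
    have h1 : z ≠ x := hzx.ne'
    have h2 : z ≠ y := hzy.ne'
    have h3 : Gᶜ.degree z ≤ 1 := by
      rw [hc]
      rcases hdeg z h1 h2 with h | h <;> omega
    rw [← SimpleGraph.card_neighborFinset_eq_degree, Finset.card_le_one] at h3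
    exact hxy (h3 x (by simpa using hzx.symm) y (by simpa using hzy.symm))
  have hsub : Gᶜ.neighborFinset x ∪ Gᶜ.neighborFinset y ⊆ S := by
    intro z hz
    rw [Finset.mem_union, SimpleGraph.mem_neighborFinset, SimpleGraph.mem_neighborFinset] at hz
    rcases hz with h | h
    · exact hpos _ _ h
    · exact hpos _ _ h
  have hcard : (Gᶜ.neighborFinset x ∪ Gᶜ.neighborFinset y).card
      = Gᶜ.degree x + Gᶜ.degree y := by
    rw [Finset.card_union_of_disjoint hdisj]
    simp only [SimpleGraph.card_neighborFinset_eq_degree]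
  have hx1 := hlt x
  have hy1 := hlt y
  rw [hc, hc] at hcard
  have heq := Finset.eq_of_subset_of_card_le hsub (by omega)
  have hxS : x ∉ S := by
    rw [← heq, Finset.mem_union, SimpleGraph.mem_neighborFinset, SimpleGraph.mem_neighborFinset]
    rintro (h | h)
    · exact h.ne rfl
    · exact hnyx h
  have hyS : y ∉ S := by
    rw [← heq, Finset.mem_union, SimpleGraph.mem_neighborFinset, SimpleGraph.mem_neighborFinset]
    rintro (h | h)
    · exact hnxy h
    · exact h.ne rfl
  simp only [hSdef, Finset.mem_filter, Finset.mem_univ, true_and, not_not] at hxS hyS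
  omega
end
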